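/- Let k₁ > 1, k₂ > 0, t ∈ ℝ, 0 < φ < π, ρ ∈ ℂ with 1/2 + iρ ≠ 0, and −1 ≤ y ≤ 1. Then as x → ±∞ (x real), Φ_ρ(x+iy) = p(x+iy) e^{−2φ(x+iy)} (ix)^{1/2−k₁−k₂−iρ} { 1 + (A(ρ) + y B(ρ))/(2ix) + O(1/x²) } and Φ_ρ*(x+iy) = p*(x+iy) e^{−2φ(x+iy)} (−ix)^{1/2−k₁−k₂+i·conj(ρ)} { 1 + (conj(A(ρ)) − y·conj(B(ρ)))/(−2ix) + O(1/x²) }, where A(ρ) = 2it(1−2k₁) + (k₁−k₂−1/2−iρ)(3/2−k₁−k₂+iρ) + (k₂−k₁+1/2+iρ)(3/2−k₁−k₂+iρ)(1/2−it+iρ)/(1/2+iρ) and B(ρ) = 2k₁+2k₂−1+2iρ. -/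

import Mathlib

noncomputable section

open MeasureTheory Filter Topology Set Asymptotics ComplexConjugate
open Complex (I)

/-- Pochhammer symbol `(a)ₙ = a(a+1)⋯(a+n-1)`. -/
def poch (a : ℂ) (n : ℕ) : ℂ := ∏ k ∈ Finset.range n, (a + k)

/-- Generalized hypergeometric series `ₚF_q(a; b; z)` as a sum. -/
def pFq (a b : List ℂ) (z : ℂ) : ℂ :=
  ∑' n : ℕ, ((a.map fun c => poch c n).prod / (b.map fun c => poch c n).prod) * z ^ n /
    (n.factorial : ℂ)

def F32 (a b c d e z : ℂ) : ℂ := pFq [a, b, c] [d, e] z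

/-- The `i`-periodic function `p(z) = (1/π) e^{πz} sin(π(k₁ − it − iz))`. -/
def pper (k₁ t : ℝ) (z : ℂ) : ℂ :=
  (1 / (Real.pi : ℂ)) * Complex.exp ((Real.pi : ℂ) * z) *
    Complex.sin ((Real.pi : ℂ) * ((k₁ : ℂ) - I * t - I * z))

/-- The second eigenfunction `Φ_ρ`. -/
def PhiC (k₁ k₂ t φ : ℝ) (ρ : ℂ) (z : ℂ) : ℂ :=
  Complex.exp (-2 * (φ : ℂ) * z) * pper k₁ t z *
    (Complex.Gamma (1 - (k₁ : ℂ) + I * t + I * z) * Complex.Gamma (1 - (k₂ : ℂ) + I * z) /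
      (Complex.Gamma ((k₁ : ℂ) + I * z + I * t) *
        Complex.Gamma (3/2 - (k₁ : ℂ) + I * z + I * ρ))) *
    F32 ((k₂ : ℂ) - (k₁ : ℂ) + 1/2 + I * ρ) (3/2 - (k₁ : ℂ) - (k₂ : ℂ) + I * ρ)
      (1/2 - I * t + I * ρ) (1 + 2 * I * ρ) (3/2 - (k₁ : ℂ) + I * z + I * ρ) 1

/-- The constant `A(ρ)` in the asymptotic expansion of `Φ_ρ`. -/
def Aconst (k₁ k₂ t : ℝ) (ρ : ℂ) : ℂ :=
  2 * I * t * (1 - 2 * (k₁ : ℂ)) +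
    ((k₁ : ℂ) - k₂ - 1/2 - I * ρ) * (3/2 - (k₁ : ℂ) - k₂ + I * ρ) +
    ((k₂ : ℂ) - k₁ + 1/2 + I * ρ) * (3/2 - (k₁ : ℂ) - k₂ + I * ρ) * (1/2 - I * t + I * ρ) /
      (1/2 + I * ρ)

/-- The constant `B(ρ) = 2k₁ + 2k₂ − 1 + 2iρ`. -/
def Bconst (k₁ k₂ : ℝ) (ρ : ℂ) : ℂ := 2 * (k₁ : ℂ) + 2 * (k₂ : ℂ) - 1 + 2 * I * ρ

/-!
For fixed `a`, the normalised ratio `R(w) = Γ(w + a) / Γ(w) · w ^ (-a) · exp (-a(a - 1) / (2w))`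
satisfies `R(w + 1) = R(w) exp ℓ(w)` with `ℓ(w) = O(w⁻³)`, and `R(w + n) → 1` by Gauss's product for
`Γ`. Summing `ℓ(w + n)` over `n` gives `R(w) = 1 + O(w⁻²)` throughout the right half-plane, hence
the first-order expansion of any quotient of two Gamma factors. The `₃F₂` is an inverse factorial
series in its parameter `3/2 - k₁ + ix + iρ`; everything beyond its first two terms is `O(x⁻²)`,
because the series is dominated by its value at a fixed point of the same vertical line.
Multiplying the three expansions gives the one of `Φ_ρ`; conjugation exchanges `ix` with `-ix` and
`y` with `-y`, which gives the one of `Φ_ρ*`.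
-/

/-! ### First-order expansions in `1 / w` -/

/-- Infinity in the closed right half-plane: the filter of `‖w‖ → ∞` with `0 ≤ w.re`. -/
def rightHalfPlaneAtInfty : Filter ℂ := Bornology.cobounded ℂ ⊓ 𝓟 {w | 0 ≤ w.re}

/-- Both ends of the imaginary axis: the filter of `‖w‖ → ∞` with `w.re = 0`. -/
def imagAxisAtInfty : Filter ℂ := Bornology.cobounded ℂ ⊓ 𝓟 {w | w.re = 0}

lemma rightHalfPlaneAtInfty_le_cobounded : rightHalfPlaneAtInfty ≤ Bornology.cobounded ℂ :=
  inf_le_left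

lemma imagAxisAtInfty_le_cobounded : imagAxisAtInfty ≤ Bornology.cobounded ℂ := inf_le_left

lemma imagAxisAtInfty_le_rightHalfPlaneAtInfty : imagAxisAtInfty ≤ rightHalfPlaneAtInfty :=
  inf_le_inf_left _ (principal_mono.2 fun _ hw ↦ hw.ge)

lemma eventually_zero_le_re_rightHalfPlaneAtInfty : ∀ᶠ w in rightHalfPlaneAtInfty, 0 ≤ w.re :=
  mem_inf_of_right (mem_principal_self _)

lemma eventually_re_eq_zero_imagAxisAtInfty : ∀ᶠ w in imagAxisAtInfty, w.re = 0 :=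
  mem_inf_of_right (mem_principal_self _)

/-- The first-order expansion `f w = 1 + c / w + O(1 / w ^ 2)` along the filter `l`. -/
def HasInvExpansion (l : Filter ℂ) (f : ℂ → ℂ) (c : ℂ) : Prop :=
  (fun w ↦ f w - (1 + c / w)) =O[l] fun w ↦ (w ^ 2)⁻¹

namespace HasInvExpansion

variable {l l' : Filter ℂ} {f g : ℂ → ℂ} {a b c : ℂ}

lemma mono (hf : HasInvExpansion l f a) (h : l' ≤ l) : HasInvExpansion l' f a :=
  IsBigO.mono hf h

lemma congr' (hf : HasInvExpansion l f a) (h : f =ᶠ[l] g) : HasInvExpansion l g a :=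
  IsBigO.congr' hf (h.sub EventuallyEq.rfl) EventuallyEq.rfl

lemma sub_one_isBigO (hl : l ≤ Bornology.cobounded ℂ) (hf : HasInvExpansion l f a) :
    (fun w ↦ f w - 1) =O[l] fun w ↦ w⁻¹ := by
  have hinv : (fun w : ℂ ↦ w⁻¹) =O[l] fun _ ↦ (1 : ℂ) :=
    (tendsto_inv₀_cobounded.mono_left hl).isBigO_one ℂ
  have hsq : (fun w : ℂ ↦ (w ^ 2)⁻¹) =O[l] fun w ↦ w⁻¹ := by
    simpa [sq] using hinv.mul (isBigO_refl (fun w : ℂ ↦ w⁻¹) l)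
  have hlin : (fun w : ℂ ↦ a / w) =O[l] fun w ↦ w⁻¹ := isBigO_const_mul_self a _ l
  exact ((IsBigO.trans hf hsq).add hlin).congr_left fun w ↦ by ring

lemma tendsto_one (hl : l ≤ Bornology.cobounded ℂ) (hf : HasInvExpansion l f a) :
    Tendsto f l (𝓝 1) := by
  have h := (hf.sub_one_isBigO hl).trans_tendsto (tendsto_inv₀_cobounded.mono_left hl)
  simpa using h.add_const 1

lemma sub_one_mul_div_isBigO (hl : l ≤ Bornology.cobounded ℂ) (hf : HasInvExpansion l f a)
    (b : ℂ) : (fun w ↦ (f w - 1) * (b / w)) =O[l] fun w ↦ (w ^ 2)⁻¹ :=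
  ((hf.sub_one_isBigO hl).mul (isBigO_const_mul_self b (fun w : ℂ ↦ w⁻¹) l)).congr
    (fun _ ↦ by rw [div_eq_mul_inv]) fun w ↦ by rw [sq, mul_inv]

lemma mul (hl : l ≤ Bornology.cobounded ℂ) (hf : HasInvExpansion l f a)
    (hg : HasInvExpansion l g b) : HasInvExpansion l (fun w ↦ f w * g w) (a + b) := by
  have hg_error : (fun w ↦ f w * (g w - (1 + b / w))) =O[l] fun w ↦ (w ^ 2)⁻¹ := by
    simpa using ((hf.tendsto_one hl).isBigO_one ℂ).mul hg
  exact ((hg_error.add (hf.sub_one_mul_div_isBigO hl b)).add hf).congr_left fun w ↦ by ring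

lemma inv (hl : l ≤ Bornology.cobounded ℂ) (hf : HasInvExpansion l f a) :
    HasInvExpansion l (fun w ↦ (f w)⁻¹) (-a) := by
  have hinv : (fun w ↦ (f w)⁻¹) =O[l] fun _ ↦ (1 : ℂ) :=
    ((hf.tendsto_one hl).inv₀ one_ne_zero).isBigO_one ℂ
  have hprod : (fun w ↦ (f w)⁻¹ * ((f w - 1) * (a / w) - (f w - (1 + a / w)))) =O[l]
      fun w ↦ (w ^ 2)⁻¹ := by
    simpa using hinv.mul ((hf.sub_one_mul_div_isBigO hl a).sub hf)
  refine hprod.congr' ?_ EventuallyEq.rfl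
  filter_upwards [(hf.tendsto_one hl).eventually_ne one_ne_zero] with w hw
  linear_combination (-1 + a / w) * mul_inv_cancel₀ hw

lemma div (hl : l ≤ Bornology.cobounded ℂ) (hf : HasInvExpansion l f a)
    (hg : HasInvExpansion l g b) : HasInvExpansion l (fun w ↦ f w / g w) (a - b) := by
  simpa only [div_eq_mul_inv, sub_eq_add_neg] using hf.mul hl (hg.inv hl)

lemma exp_div (hl : l ≤ Bornology.cobounded ℂ) (a : ℂ) :
    HasInvExpansion l (fun w ↦ Complex.exp (a / w)) a := by
  have hlim : Tendsto (fun w : ℂ ↦ a * w⁻¹) l (𝓝 0) := by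
    simpa using (tendsto_inv₀_cobounded.mono_left hl).const_mul a
  have h := (Complex.exp_sub_sum_range_isBigO_pow 2).comp_tendsto hlim
  simp only [Function.comp_def, Finset.sum_range_succ, Finset.sum_range_zero, pow_zero, pow_one,
    Nat.factorial_zero, Nat.factorial_one, Nat.cast_one, div_one, zero_add] at h
  refine h.trans ?_
  simpa only [mul_pow, inv_pow] using isBigO_const_mul_self (a ^ 2) (fun w : ℂ ↦ (w ^ 2)⁻¹) l

lemma conj_comp_conj (hf : HasInvExpansion imagAxisAtInfty f a) :
    HasInvExpansion imagAxisAtInfty (fun w ↦ conj (f (conj w))) (conj a) := by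
  have hconj : Tendsto (fun w : ℂ ↦ conj w) imagAxisAtInfty imagAxisAtInfty := by
    refine tendsto_inf.2 ⟨?_, tendsto_principal.2 ?_⟩
    · refine Tendsto.mono_left ?_ imagAxisAtInfty_le_cobounded
      simpa [← tendsto_norm_atTop_iff_cobounded] using tendsto_norm_cobounded_atTop
    · simpa using eventually_re_eq_zero_imagAxisAtInfty
  refine .of_norm_norm (IsBigO.congr (hf.comp_tendsto hconj).norm_norm (fun w ↦ ?_) fun w ↦ ?_)
  · rw [← RCLike.norm_conj]
    simp
  · simp

lemma comp_mul_ofReal (hf : HasInvExpansion imagAxisAtInfty f c) {u : ℂ} (hre : u.re = 0)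
    (hu : u ≠ 0) (P : ℝ → ℂ) :
    (fun x : ℝ ↦ P x * (f (u * x) - (1 + c / (u * x)))) =O[cocompact ℝ]
      fun x ↦ ‖P x‖ / x ^ 2 := by
  have hlim : Tendsto (fun x : ℝ ↦ u * (x : ℂ)) (cocompact ℝ) imagAxisAtInfty := by
    refine tendsto_inf.2 ⟨?_, tendsto_principal.2 (.of_forall fun x ↦ by simp [hre])⟩
    rw [← Metric.cobounded_eq_cocompact]
    exact (tendsto_mul_left_cobounded hu).comp (RCLike.tendsto_ofReal_cobounded_cobounded ℂ)
  have hsq : (fun x : ℝ ↦ ((u * (x : ℂ)) ^ 2)⁻¹) =O[cocompact ℝ] fun x ↦ (x ^ 2)⁻¹ := by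
    refine .of_bound ‖(u ^ 2)⁻¹‖ (.of_forall fun x ↦ ?_)
    simp [mul_pow, mul_comm]
  exact ((isBigO_refl P _).norm_right.mul ((hf.comp_tendsto hlim).trans hsq)).congr_right
    fun x ↦ (div_eq_mul_inv _ _).symm

lemma isBigO_cpow_mul_ofReal {α : ℂ}
    (hf : HasInvExpansion imagAxisAtInfty (fun w ↦ f w * w ^ (-α)) c) {u : ℂ} (hre : u.re = 0)
    (hu : u ≠ 0) (P : ℝ → ℂ) :
    (fun x : ℝ ↦ P x * f (u * x) - P x * (u * x) ^ α * (1 + c / (u * x))) =O[cocompact ℝ]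
      fun x ↦ ‖P x * (u * x) ^ α‖ / x ^ 2 := by
  refine (hf.comp_mul_ofReal hre hu fun x ↦ P x * (u * x) ^ α).congr' ?_ EventuallyEq.rfl
  rw [← Metric.cobounded_eq_cocompact]
  filter_upwards [Bornology.eventually_ne_cobounded 0] with x hx
  have hux : u * (x : ℂ) ≠ 0 := mul_ne_zero hu (Complex.ofReal_ne_zero.2 hx)
  have hpow : (u * (x : ℂ)) ^ α ≠ 0 := by simp [Complex.cpow_eq_zero_iff, hux]
  rw [Complex.cpow_neg]
  field_simp

end HasInvExpansion

/-! ### Quotients of Gamma functions -/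

lemma log_one_add_div_isBigO (a : ℂ) :
    (fun w : ℂ ↦ Complex.log (1 + a / w) - (a / w - (a / w) ^ 2 / 2))
      =O[Bornology.cobounded ℂ] fun w ↦ (w ^ 3)⁻¹ := by
  have hlim : Tendsto (fun w : ℂ ↦ a / w) (Bornology.cobounded ℂ) (𝓝 0) := by
    simpa [div_eq_mul_inv] using tendsto_inv₀_cobounded.const_mul a
  have htaylor : (fun w : ℂ ↦ Complex.log (1 + a / w) - Complex.logTaylor 3 (a / w))
      =O[Bornology.cobounded ℂ] fun w ↦ (a / w) ^ 3 :=
    (Complex.log_sub_logTaylor_isBigO 2).comp_tendsto hlim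
  have hcube : (fun w : ℂ ↦ (a / w) ^ 3) =O[Bornology.cobounded ℂ] fun w ↦ (w ^ 3)⁻¹ :=
    (isBigO_const_mul_self (a ^ 3) (fun w : ℂ ↦ (w ^ 3)⁻¹) _).congr_left
      fun w ↦ by rw [div_pow, div_eq_mul_inv]
  refine (htaylor.trans hcube).congr_left fun w ↦ ?_
  simp only [Complex.logTaylor, Finset.sum_range_succ, Finset.sum_range_zero]
  push_cast
  ring

lemma add_const_inv_isBigO_inv (c : ℂ) :
    (fun w : ℂ ↦ (w + c)⁻¹) =O[Bornology.cobounded ℂ] fun w ↦ w⁻¹ := by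
  have hequiv : (fun w : ℂ ↦ w + c) ~[Bornology.cobounded ℂ] fun w ↦ w :=
    IsEquivalent.refl.add_isLittleO (isLittleO_const_id_cobounded c)
  exact hequiv.inv.isBigO

/-- The ratio `Γ(w + a) / Γ(w)` divided by its second-order asymptotics
`w ^ a * exp (a * (a - 1) / (2 * w))`. -/
def gammaRatio (a w : ℂ) : ℂ :=
  Complex.Gamma (w + a) / Complex.Gamma w *
    Complex.exp (-(a * Complex.log w) - a * (a - 1) / 2 / w)

/-- The logarithm of `gammaRatio a (w + 1) / gammaRatio a w` in the right half-plane. -/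
def gammaRatioLogStep (a w : ℂ) : ℂ :=
  Complex.log (1 + a / w) - a * Complex.log (1 + 1 / w) + a * (a - 1) / 2 * (1 / w - 1 / (w + 1))

lemma gammaRatioLogStep_isBigO (a : ℂ) :
    gammaRatioLogStep a =O[Bornology.cobounded ℂ] fun w ↦ (w ^ 3)⁻¹ := by
  have hinv : (fun w : ℂ ↦ (w ^ 2)⁻¹ * (w + 1)⁻¹) =O[Bornology.cobounded ℂ] fun w ↦ (w ^ 3)⁻¹ :=
    ((isBigO_refl (fun w : ℂ ↦ (w ^ 2)⁻¹) _).mul (add_const_inv_isBigO_inv 1)).congr_right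
      fun w ↦ by rw [← mul_inv, ← pow_succ]
  have hsum := ((log_one_add_div_isBigO a).sub ((log_one_add_div_isBigO 1).const_mul_left a)).sub
    (hinv.const_mul_left (a * (a - 1) / 2))
  refine hsum.congr' ?_ EventuallyEq.rfl
  filter_upwards [Bornology.eventually_ne_cobounded (0 : ℂ),
    Bornology.eventually_ne_cobounded (-1 : ℂ)] with w hw hw1
  have hw1' : w + 1 ≠ 0 := fun h ↦ hw1 (eq_neg_of_add_eq_zero_left h)
  rw [gammaRatioLogStep]
  field_simp
  ring

lemma norm_le_norm_of_abs_re_le_of_abs_im_le {z w : ℂ} (hre : |z.re| ≤ |w.re|)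
    (him : |z.im| ≤ |w.im|) : ‖z‖ ≤ ‖w‖ := by
  rw [Complex.norm_eq_sqrt_sq_add_sq, Complex.norm_eq_sqrt_sq_add_sq]
  exact Real.sqrt_le_sqrt (add_le_add (sq_le_sq.2 hre) (sq_le_sq.2 him))

lemma norm_le_norm_add_nat {w : ℂ} (hw : 0 ≤ w.re) (k : ℕ) : ‖w‖ ≤ ‖w + k‖ := by
  refine norm_le_norm_of_abs_re_le_of_abs_im_le ?_ (by simp)
  simpa [abs_of_nonneg hw] using le_abs.2 (.inl (by linarith [k.cast_nonneg (α := ℝ)]))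

lemma half_norm_add_nat_le {w : ℂ} (hw : 0 ≤ w.re) (k : ℕ) : (‖w‖ + k) / 2 ≤ ‖w + k‖ := by
  have hnat : (k : ℝ) ≤ ‖w + k‖ :=
    calc (k : ℝ) ≤ (w + k).re := by simpa using hw
      _ ≤ ‖w + k‖ := Complex.re_le_norm _
  linarith [norm_le_norm_add_nat hw k]

lemma sum_range_inv_add_nat_sq_le {r : ℝ} (hr : 1 ≤ r) (n : ℕ) :
    ∑ k ∈ Finset.range n, ((r + k) ^ 2)⁻¹ ≤ 2 / r := by
  have hterm (k : ℕ) : ((r + k) ^ 2)⁻¹ ≤ 2 / (r + k) - 2 / (r + (k + 1 : ℕ)) := by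
    have hk : 0 < r + k := by positivity
    push_cast
    rw [← add_assoc, div_sub_div _ _ (by positivity) (by positivity), inv_eq_one_div,
      div_le_div_iff₀ (by positivity) (by positivity)]
    nlinarith [mul_le_mul_of_nonneg_left (hr.trans (le_add_of_nonneg_right k.cast_nonneg)) hk.le]
  calc ∑ k ∈ Finset.range n, ((r + k) ^ 2)⁻¹
      ≤ ∑ k ∈ Finset.range n, (2 / (r + k) - 2 / (r + (k + 1 : ℕ))) :=
        Finset.sum_le_sum fun k _ ↦ hterm k
    _ = 2 / r - 2 / (r + n) := by rw [Finset.sum_range_sub' fun k : ℕ ↦ 2 / (r + k)]; simp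
    _ ≤ 2 / r := sub_le_self _ (by positivity)

lemma exists_eventually_norm_sum_add_nat_le {f : ℂ → ℂ}
    (hf : f =O[Bornology.cobounded ℂ] fun w ↦ (w ^ 3)⁻¹) :
    ∃ C, ∀ᶠ w in rightHalfPlaneAtInfty, ∀ n : ℕ,
      ‖∑ k ∈ Finset.range n, f (w + k)‖ ≤ C / ‖w‖ ^ 2 := by
  obtain ⟨C, hC, hf⟩ := hf.exists_pos
  obtain ⟨R, -, hR⟩ := hasBasis_cobounded_norm.eventually_iff.1 hf.bound
  refine ⟨8 * C, ?_⟩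
  filter_upwards [eventually_zero_le_re_rightHalfPlaneAtInfty,
    rightHalfPlaneAtInfty_le_cobounded (eventually_cobounded_le_norm (max 1 R))]
    with w hre hnorm n
  obtain ⟨hone, hR'⟩ := max_le_iff.1 hnorm
  have hterm (k : ℕ) : ‖f (w + k)‖ ≤ 4 * C / ‖w‖ * ((‖w‖ + k) ^ 2)⁻¹ :=
    calc ‖f (w + k)‖ ≤ C * ‖((w + k) ^ 3)⁻¹‖ := hR (hR'.trans (norm_le_norm_add_nat hre k))
      _ = C / (‖w + k‖ * ‖w + k‖ ^ 2) := by rw [norm_inv, norm_pow, pow_succ', div_eq_mul_inv]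
      _ ≤ C / (‖w‖ * ((‖w‖ + k) / 2) ^ 2) := by
        gcongr
        · exact norm_le_norm_add_nat hre k
        · exact half_norm_add_nat_le hre k
      _ = 4 * C / ‖w‖ * ((‖w‖ + k) ^ 2)⁻¹ := by field_simp; norm_num
  calc ‖∑ k ∈ Finset.range n, f (w + k)‖
      ≤ ∑ k ∈ Finset.range n, 4 * C / ‖w‖ * ((‖w‖ + k) ^ 2)⁻¹ :=
        norm_sum_le_of_le _ fun k _ ↦ hterm k
    _ = 4 * C / ‖w‖ * ∑ k ∈ Finset.range n, ((‖w‖ + k) ^ 2)⁻¹ := by rw [Finset.mul_sum]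
    _ ≤ 4 * C / ‖w‖ * (2 / ‖w‖) := by gcongr; exact sum_range_inv_add_nat_sq_le hone n
    _ = 8 * C / ‖w‖ ^ 2 := by field_simp; norm_num

lemma log_add_one {w : ℂ} (hre : 0 ≤ w.re) (hw : w ≠ 0) :
    Complex.log (w + 1) = Complex.log w + Complex.log (1 + 1 / w) := by
  have hre' : 0 < (1 + 1 / w).re := by
    have : 0 ≤ w.re / Complex.normSq w := div_nonneg hre (Complex.normSq_nonneg w)
    simp only [Complex.add_re, Complex.one_re, one_div, Complex.inv_re]
    linarith
  have hne : 1 + 1 / w ≠ 0 := fun h ↦ hre'.ne' (by rw [h, Complex.zero_re])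
  rw [show w + 1 = w * (1 + 1 / w) by field_simp, Complex.log_mul_eq_add_log_iff hw hne]
  have harg := abs_le.1 (Complex.abs_arg_le_pi_div_two_iff.2 hre)
  have harg' := abs_lt.1 (Complex.abs_arg_lt_pi_div_two_iff.2 (.inl hre'))
  constructor <;> linarith [harg.1, harg.2, harg'.1, harg'.2]

lemma gammaRatio_add_one {a w : ℂ} (hre : 0 ≤ w.re) (hw : w ≠ 0) (ha : w + a ≠ 0) :
    gammaRatio a (w + 1) = gammaRatio a w * Complex.exp (gammaRatioLogStep a w) := by
  have hlog : Complex.exp (Complex.log (1 + a / w)) = (w + a) / w := by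
    rw [one_add_div hw, Complex.exp_log (div_ne_zero ha hw)]
  rw [gammaRatio, gammaRatio, gammaRatioLogStep, add_right_comm, Complex.Gamma_add_one _ ha,
    Complex.Gamma_add_one _ hw, log_add_one hre hw, mul_div_mul_comm, ← hlog,
    mul_comm (Complex.exp _), mul_assoc, mul_assoc, ← Complex.exp_add, ← Complex.exp_add]
  ring_nf

lemma gammaRatio_add_nat {a w : ℂ} (hre : 0 ≤ w.re) (hw : w ≠ 0) (ha : ∀ m : ℕ, w + a ≠ -m)
    (n : ℕ) : gammaRatio a (w + n) =
      gammaRatio a w * Complex.exp (∑ k ∈ Finset.range n, gammaRatioLogStep a (w + k)) := by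
  induction n with
  | zero => simp
  | succ n ih =>
    have hre_n : 0 ≤ (w + n).re := by simpa using add_nonneg hre n.cast_nonneg
    have hw_n : w + n ≠ 0 :=
      norm_pos_iff.1 ((norm_pos_iff.2 hw).trans_le (norm_le_norm_add_nat hre n))
    have ha_n : w + n + a ≠ 0 := fun h ↦ ha n (by linear_combination h)
    rw [Finset.sum_range_succ, Complex.exp_add, ← mul_assoc, ← ih, Nat.cast_succ, ← add_assoc,
      gammaRatio_add_one hre_n hw_n ha_n]

lemma poch_succ (a : ℂ) (n : ℕ) : poch a (n + 1) = poch a n * (a + n) :=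
  Finset.prod_range_succ _ n

lemma Gamma_add_nat {z : ℂ} (hz : ∀ m : ℕ, z ≠ -m) (n : ℕ) :
    Complex.Gamma (z + n) = Complex.Gamma z * poch z n := by
  induction n with
  | zero => simp [poch]
  | succ n ih =>
    have hz_n : z + n ≠ 0 := fun h ↦ hz n (eq_neg_of_add_eq_zero_left h)
    rw [poch_succ, ← mul_assoc, ← ih, Nat.cast_succ, ← add_assoc, Complex.Gamma_add_one _ hz_n,
      mul_comm]

lemma tendsto_Gamma_add_nat_div {z : ℂ} (hz : ∀ m : ℕ, z ≠ -m) :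
    Tendsto (fun n : ℕ ↦ Complex.Gamma (z + (n + 1 : ℕ)) / ((n : ℂ) ^ z * n.factorial))
      atTop (𝓝 1) := by
  have hΓ := Complex.Gamma_ne_zero hz
  have h := (tendsto_const_nhds (x := Complex.Gamma z)).div
    (Complex.GammaSeq_tendsto_Gamma z) hΓ
  rw [div_self hΓ] at h
  refine h.congr fun n ↦ ?_
  rw [Pi.div_apply, Gamma_add_nat hz, Complex.GammaSeq, div_div_eq_mul_div, poch]

lemma tendsto_log_add_nat_sub_log (w : ℂ) :
    Tendsto (fun n : ℕ ↦ Complex.log (w + n) - Complex.log n) atTop (𝓝 0) := by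
  have hratio : Tendsto (fun n : ℕ ↦ 1 + w / n) atTop (𝓝 1) := by
    simpa using (tendsto_const_div_atTop_nhds_zero_nat w).const_add 1
  have hlog : Tendsto (fun n : ℕ ↦ Complex.log (1 + w / n)) atTop (𝓝 0) := by
    simpa using hratio.clog Complex.one_mem_slitPlane
  refine hlog.congr' ?_
  filter_upwards [eventually_gt_atTop 0, hratio.eventually_ne one_ne_zero] with n hn hne
  have hn' : (n : ℂ) ≠ 0 := Nat.cast_ne_zero.2 hn.ne'
  have hmul : w + n = ((n : ℝ) : ℂ) * (1 + w / n) := by push_cast; field_simp; ring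
  rw [hmul, Complex.log_ofReal_mul (Nat.cast_pos.2 hn) hne]
  simp

lemma tendsto_gammaRatio_add_nat {a w : ℂ} (hw : ∀ m : ℕ, w ≠ -m) (ha : ∀ m : ℕ, w + a ≠ -m) :
    Tendsto (fun n : ℕ ↦ gammaRatio a (w + (n + 1 : ℕ))) atTop (𝓝 1) := by
  have hΓ := (tendsto_Gamma_add_nat_div ha).div (tendsto_Gamma_add_nat_div hw) one_ne_zero
  have hlog : Tendsto (fun n : ℕ ↦ Complex.log (w + (n + 1 : ℕ)) - Complex.log n) atTop (𝓝 0) := by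
    simpa [add_assoc, add_comm (1 : ℂ)] using tendsto_log_add_nat_sub_log (w + 1)
  have hinv : Tendsto (fun n : ℕ ↦ (w + (n + 1 : ℕ))⁻¹) atTop (𝓝 0) := by
    refine tendsto_inv₀_cobounded.comp ((tendsto_const_add_cobounded w).comp ?_)
    exact tendsto_natCast_atTop_cobounded.comp (tendsto_add_atTop_nat 1)
  have hexp := ((hlog.const_mul (-a)).sub (hinv.const_mul (a * (a - 1) / 2))).cexp
  have hprod := hΓ.mul hexp
  simp only [mul_zero, sub_zero, Complex.exp_zero, div_one, mul_one] at hprod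
  refine hprod.congr' ?_
  filter_upwards [eventually_ne_atTop 0] with n hn
  have hn' : (n : ℂ) ≠ 0 := Nat.cast_ne_zero.2 hn
  have hfac : (n.factorial : ℂ) ≠ 0 := Nat.cast_ne_zero.2 n.factorial_ne_zero
  have hpow : (n : ℂ) ^ w ≠ 0 := by simp [hn']
  rw [Pi.div_apply, gammaRatio, add_right_comm w, Complex.cpow_add _ _ hn',
    Complex.cpow_def_of_ne_zero hn' a]
  rw [show -a * (Complex.log (w + (n + 1 : ℕ)) - Complex.log n) -
      a * (a - 1) / 2 * (w + (n + 1 : ℕ))⁻¹ = Complex.log n * a +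
      (-(a * Complex.log (w + (n + 1 : ℕ))) - a * (a - 1) / 2 / (w + (n + 1 : ℕ))) by ring,
    Complex.exp_add]
  field_simp

lemma eventually_add_ne_neg_nat (a : ℂ) :
    ∀ᶠ w in rightHalfPlaneAtInfty, ∀ m : ℕ, w + a ≠ -m := by
  filter_upwards [eventually_zero_le_re_rightHalfPlaneAtInfty,
    rightHalfPlaneAtInfty_le_cobounded (tendsto_norm_cobounded_atTop.eventually_gt_atTop ‖a‖)]
    with w hre hnorm m h
  refine hnorm.not_ge ((norm_le_norm_add_nat hre m).trans_eq ?_)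
  rw [show w + m = -a by linear_combination h, norm_neg]

lemma hasInvExpansion_gammaRatio (a : ℂ) :
    HasInvExpansion rightHalfPlaneAtInfty (gammaRatio a) 0 := by
  obtain ⟨C, hC⟩ := exists_eventually_norm_sum_add_nat_le (gammaRatioLogStep_isBigO a)
  have hsmall : ∀ᶠ w in rightHalfPlaneAtInfty, C / ‖w‖ ^ 2 ≤ 1 := by
    have hlim : Tendsto (fun w : ℂ ↦ C / ‖w‖ ^ 2) rightHalfPlaneAtInfty (𝓝 0) :=
      ((tendsto_pow_atTop two_ne_zero).comp (tendsto_norm_cobounded_atTop.mono_left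
        rightHalfPlaneAtInfty_le_cobounded)).const_div_atTop C
    exact hlim.eventually_le_const one_pos
  refine IsBigO.of_bound (2 * C) ?_
  filter_upwards [eventually_zero_le_re_rightHalfPlaneAtInfty, hC, hsmall,
    eventually_add_ne_neg_nat a, eventually_add_ne_neg_nat 0]
    with w hre hsum hsmall ha hw
  simp only [add_zero] at hw
  have hlim := tendsto_gammaRatio_add_nat hw ha
  have hstep (n : ℕ) : ‖gammaRatio a w - gammaRatio a (w + (n + 1 : ℕ))‖ ≤
      ‖gammaRatio a (w + (n + 1 : ℕ))‖ * (2 * (C / ‖w‖ ^ 2)) := by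
    set S := ∑ k ∈ Finset.range (n + 1), gammaRatioLogStep a (w + k)
    have hS : ‖-S‖ ≤ C / ‖w‖ ^ 2 := (norm_neg S).trans_le (hsum (n + 1))
    have hback : gammaRatio a w = gammaRatio a (w + (n + 1 : ℕ)) * Complex.exp (-S) := by
      rw [gammaRatio_add_nat hre (by simpa using hw 0) ha, mul_assoc, ← Complex.exp_add,
        add_neg_cancel, Complex.exp_zero, mul_one]
    calc ‖gammaRatio a w - gammaRatio a (w + (n + 1 : ℕ))‖
        = ‖gammaRatio a (w + (n + 1 : ℕ))‖ * ‖Complex.exp (-S) - 1‖ := by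
          rw [← norm_mul, mul_sub, ← hback, mul_one]
      _ ≤ ‖gammaRatio a (w + (n + 1 : ℕ))‖ * (2 * (C / ‖w‖ ^ 2)) := by
          gcongr
          exact (Complex.norm_exp_sub_one_le (hS.trans hsmall)).trans (by gcongr)
  have hle := le_of_tendsto_of_tendsto' (tendsto_const_nhds.sub hlim).norm
    (hlim.norm.mul_const _) hstep
  simpa [div_eq_mul_inv, mul_assoc] using hle

lemma hasInvExpansion_Gamma_add_div_Gamma (a : ℂ) :
    HasInvExpansion rightHalfPlaneAtInfty
      (fun w ↦ Complex.Gamma (w + a) / Complex.Gamma w * w ^ (-a)) (a * (a - 1) / 2) := by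
  have h := (hasInvExpansion_gammaRatio a).mul rightHalfPlaneAtInfty_le_cobounded
    (.exp_div rightHalfPlaneAtInfty_le_cobounded (a * (a - 1) / 2))
  rw [zero_add] at h
  refine h.congr' ?_
  filter_upwards [eventually_add_ne_neg_nat 0] with w hw
  rw [gammaRatio, Complex.cpow_def_of_ne_zero (by simpa using hw 0), mul_assoc, ← Complex.exp_add]
  ring_nf

lemma hasInvExpansion_Gamma_div_Gamma (a b : ℂ) :
    HasInvExpansion rightHalfPlaneAtInfty
      (fun w ↦ Complex.Gamma (w + a) / Complex.Gamma (w + b) * w ^ (b - a))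
      ((a * (a - 1) - b * (b - 1)) / 2) := by
  have h := (hasInvExpansion_Gamma_add_div_Gamma a).div rightHalfPlaneAtInfty_le_cobounded
    (hasInvExpansion_Gamma_add_div_Gamma b)
  rw [← sub_div] at h
  refine h.congr' ?_
  filter_upwards [eventually_add_ne_neg_nat 0] with w hw
  simp only [add_zero] at hw
  have hw0 : w ≠ 0 := by simpa using hw 0
  rw [mul_div_mul_comm, div_div_div_cancel_right₀ (Complex.Gamma_ne_zero hw),
    ← Complex.cpow_sub _ _ hw0, neg_sub_neg]

/-! ### Pochhammer symbols and inverse factorial series -/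

lemma poch_one (n : ℕ) : poch 1 n = n.factorial := by
  induction n with
  | zero => simp [poch]
  | succ n ih => rw [poch_succ, ih, Nat.factorial_succ]; push_cast; ring

lemma poch_add (a : ℂ) (m n : ℕ) : poch a (m + n) = poch a m * poch (a + m) n := by
  simp only [poch, Finset.prod_range_add, Nat.cast_add, add_assoc]

lemma poch_two (a : ℂ) : poch a 2 = a * (a + 1) := by
  simp [poch, Finset.prod_range_succ]

lemma poch_ne_zero {a : ℂ} (ha : a.im ≠ 0) (n : ℕ) : poch a n ≠ 0 :=
  Finset.prod_ne_zero_iff.2 fun k _ h ↦ ha (by simpa using congrArg Complex.im h)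

lemma norm_poch_le_norm_poch {a b : ℂ} (hre : a.re = b.re) (him : |a.im| ≤ |b.im|) (n : ℕ) :
    ‖poch a n‖ ≤ ‖poch b n‖ := by
  rw [poch, poch, norm_prod, norm_prod]
  refine Finset.prod_le_prod (fun _ _ ↦ norm_nonneg _) fun k _ ↦ ?_
  exact norm_le_norm_of_abs_re_le_of_abs_im_le (by simp [hre]) (by simpa using him)

lemma norm_natCast_cpow_mul_factorial_eventuallyEq (a : ℂ) :
    (fun n : ℕ ↦ ‖(n : ℂ) ^ a * n.factorial‖) =ᶠ[atTop] fun n ↦ (n : ℝ) ^ a.re * n.factorial := by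
  filter_upwards [eventually_gt_atTop 0] with n hn
  rw [norm_mul, Complex.norm_natCast_cpow_of_pos hn, Complex.norm_natCast]

lemma natCast_cpow_mul_factorial_ne_zero (a : ℂ) {n : ℕ} (hn : n ≠ 0) :
    (n : ℂ) ^ a * n.factorial ≠ 0 := by
  simp [hn, n.factorial_ne_zero]

lemma inv_poch_succ_isBigO (a : ℂ) :
    (fun n : ℕ ↦ (poch a (n + 1))⁻¹) =O[atTop]
      fun n : ℕ ↦ ((n : ℝ) ^ a.re * n.factorial)⁻¹ := by
  have hpow : (fun n : ℕ ↦ ((n : ℂ) ^ a * n.factorial)⁻¹) =O[atTop]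
      fun n : ℕ ↦ ((n : ℝ) ^ a.re * n.factorial)⁻¹ := by
    refine IsBigO.of_norm_eventuallyLE ?_
    filter_upwards [norm_natCast_cpow_mul_factorial_eventuallyEq a] with n hn
    rw [norm_inv, hn]
  have h := ((Complex.GammaSeq_tendsto_Gamma a).isBigO_one ℝ).mul hpow
  simp only [one_mul] at h
  refine h.congr' ?_ EventuallyEq.rfl
  filter_upwards [eventually_ne_atTop 0] with n hn
  rw [Complex.GammaSeq, ← poch, div_mul_eq_mul_div,
    mul_inv_cancel₀ (natCast_cpow_mul_factorial_ne_zero a hn), one_div]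

lemma poch_succ_isBigO (a : ℂ) :
    (fun n : ℕ ↦ poch a (n + 1)) =O[atTop] fun n : ℕ ↦ (n : ℝ) ^ a.re * n.factorial := by
  by_cases ha : ∀ m : ℕ, a ≠ -m
  · have hpow : (fun n : ℕ ↦ (n : ℂ) ^ a * n.factorial) =O[atTop]
        fun n : ℕ ↦ (n : ℝ) ^ a.re * n.factorial :=
      .of_norm_eventuallyLE (norm_natCast_cpow_mul_factorial_eventuallyEq a).le
    have h := (((Complex.GammaSeq_tendsto_Gamma a).inv₀ (Complex.Gamma_ne_zero ha)).isBigO_one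
      ℝ).mul hpow
    simp only [one_mul] at h
    refine h.congr' ?_ EventuallyEq.rfl
    filter_upwards [eventually_ne_atTop 0] with n hn
    rw [Complex.GammaSeq, ← poch, inv_div,
      div_mul_cancel₀ _ (natCast_cpow_mul_factorial_ne_zero a hn)]
  · push Not at ha
    obtain ⟨m, rfl⟩ := ha
    have hzero : (fun n : ℕ ↦ poch (-m : ℂ) (n + 1)) =ᶠ[atTop] 0 := by
      filter_upwards [eventually_ge_atTop m] with n hn
      exact Finset.prod_eq_zero (Finset.mem_range.2 (Nat.lt_succ_of_le hn)) (neg_add_cancel _)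
    exact hzero.trans_isBigO (isBigO_zero _ _)

lemma F32_one (a b c d e : ℂ) :
    F32 a b c d e 1 =
      ∑' n : ℕ, poch a n * poch b n * poch c n / (poch d n * poch 1 n) / poch e n := by
  simp only [F32, pFq, List.map_cons, List.map_nil, List.prod_cons, List.prod_nil, mul_one, one_pow,
    poch_one, div_div, mul_assoc, mul_left_comm, mul_comm]

lemma summable_F32_one {a b c d e : ℂ} (h : 0 < (d + e - a - b - c).re) :
    Summable fun n : ℕ ↦ poch a n * poch b n * poch c n / (poch d n * poch 1 n) / poch e n := by
  rw [← summable_nat_add_iff 1]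
  refine summable_of_isBigO_nat (Real.summable_nat_rpow.2
    (show -(d + e - a - b - c).re - 1 < -1 by linarith)) ?_
  have hO := (((poch_succ_isBigO a).mul (poch_succ_isBigO b)).mul (poch_succ_isBigO c)).mul
    (((inv_poch_succ_isBigO d).mul (inv_poch_succ_isBigO 1)).mul (inv_poch_succ_isBigO e))
  refine hO.congr' (.of_forall fun n ↦ by simp only [div_eq_mul_inv, mul_inv, mul_assoc]) ?_
  filter_upwards [eventually_gt_atTop 0] with n hn
  have hn' : (0 : ℝ) < n := Nat.cast_pos.2 hn
  have hd := (Real.rpow_pos_of_pos hn' d.re).ne'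
  have he := (Real.rpow_pos_of_pos hn' e.re).ne'
  rw [show -(d + e - a - b - c).re - 1 = a.re + b.re + c.re - d.re - e.re - 1 by
      simp only [Complex.add_re, Complex.sub_re]; ring,
    Real.rpow_sub hn', Real.rpow_sub hn', Real.rpow_sub hn', Real.rpow_add hn',
    Real.rpow_add hn', Complex.one_re]
  field_simp

section InverseFactorialSeries

variable {u : ℕ → ℂ} {σ s : ℂ}

lemma norm_div_poch_le (v : ℂ) (hσ : σ.im ≠ 0) (hre : σ.re = s.re) (him : |σ.im| ≤ |s.im|)
    (n : ℕ) : ‖v / poch s n‖ ≤ ‖v / poch σ n‖ := by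
  have hpos : 0 < ‖poch σ n‖ := norm_pos_iff.2 (poch_ne_zero hσ n)
  rw [norm_div, norm_div]
  gcongr
  exact norm_poch_le_norm_poch hre him n

lemma summable_div_poch (hu : Summable fun n ↦ u n / poch σ n) (hσ : σ.im ≠ 0)
    (hre : σ.re = s.re) (him : |σ.im| ≤ |s.im|) : Summable fun n ↦ u n / poch s n :=
  hu.norm.of_norm_bounded fun n ↦ norm_div_poch_le (u n) hσ hre him n

lemma norm_tsum_div_poch_le (hu : Summable fun n ↦ u n / poch σ n) (hσ : σ.im ≠ 0)
    (hre : σ.re = s.re) (him : |σ.im| ≤ |s.im|) :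
    ‖∑' n, u n / poch s n‖ ≤ ∑' n, ‖u n / poch σ n‖ :=
  tsum_of_norm_bounded hu.norm.hasSum fun n ↦ norm_div_poch_le (u n) hσ hre him n

lemma div_poch_add_two (v s : ℂ) (n : ℕ) :
    v / poch s (n + 2) = (s * (s + 1))⁻¹ * (v / poch (s + 2) n) := by
  rw [add_comm, poch_add, poch_two, Nat.cast_ofNat, div_mul_eq_div_div_swap, inv_mul_eq_div]

lemma tsum_div_poch_eq (hs : Summable fun n ↦ u n / poch s n) :
    ∑' n, u n / poch s n =
      u 0 + u 1 / s + (s * (s + 1))⁻¹ * ∑' n, u (n + 2) / poch (s + 2) n := by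
  rw [← hs.sum_add_tsum_nat_add 2, ← tsum_mul_left]
  simp only [div_poch_add_two]
  simp [Finset.sum_range_succ, poch]

end InverseFactorialSeries

lemma eventually_le_abs_add_im (e : ℂ) (r : ℝ) : ∀ᶠ w in imagAxisAtInfty, r ≤ |(w + e).im| := by
  filter_upwards [eventually_re_eq_zero_imagAxisAtInfty,
    imagAxisAtInfty_le_cobounded (eventually_cobounded_le_norm (r + |e.im|))] with w hre hnorm
  rw [← Complex.abs_im_eq_norm.2 hre] at hnorm
  have : |w.im| - |e.im| ≤ |(w + e).im| := by
    simpa using abs_sub_abs_le_abs_sub w.im (-e.im)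
  linarith

lemma div_add_const_sub_div_isBigO (c e : ℂ) :
    (fun w : ℂ ↦ c / (w + e) - c / w) =O[Bornology.cobounded ℂ] fun w ↦ (w ^ 2)⁻¹ := by
  have h := ((add_const_inv_isBigO_inv e).mul
    (isBigO_refl (fun w : ℂ ↦ w⁻¹) (Bornology.cobounded ℂ))).const_mul_left (-(c * e))
  refine h.congr' ?_ (.of_forall fun w ↦ by simp only [sq, mul_inv])
  filter_upwards [Bornology.eventually_ne_cobounded (0 : ℂ),
    Bornology.eventually_ne_cobounded (-e)] with w hw hwe
  have hwe' : w + e ≠ 0 := fun h ↦ hwe (eq_neg_of_add_eq_zero_left h)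
  field_simp
  ring

lemma hasInvExpansion_tsum_div_poch {u : ℕ → ℂ} {e σ : ℂ} (hu0 : u 0 = 1) (hre : σ.re = e.re)
    (hσ : σ.im ≠ 0) (hu : Summable fun n ↦ u n / poch σ n) :
    HasInvExpansion imagAxisAtInfty (fun w ↦ ∑' n, u n / poch (w + e) n) (u 1) := by
  have hu2 : Summable fun n ↦ u (n + 2) / poch (σ + 2) n := by
    have h := (summable_nat_add_iff 2).2 hu
    simp only [div_poch_add_two] at h
    refine (summable_mul_left_iff (inv_ne_zero ?_)).1 h
    rw [← poch_two]
    exact poch_ne_zero hσ 2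
  have hinv2 : (fun w : ℂ ↦ (w + e)⁻¹ * (w + (e + 1))⁻¹) =O[imagAxisAtInfty] fun w ↦ (w ^ 2)⁻¹ :=
    (((add_const_inv_isBigO_inv e).mul (add_const_inv_isBigO_inv (e + 1))).mono
      imagAxisAtInfty_le_cobounded).congr_right fun w ↦ by rw [sq, mul_inv]
  have hshift := (div_add_const_sub_div_isBigO (u 1) e).mono imagAxisAtInfty_le_cobounded
  -- The Pochhammer symbols grow with `|w.im|`, so the series at `σ` dominates.
  have htsum : (fun w ↦ ∑' n, u (n + 2) / poch (w + e + 2) n) =O[imagAxisAtInfty]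
      fun _ ↦ (1 : ℂ) := by
    refine IsBigO.of_bound (∑' n, ‖u (n + 2) / poch (σ + 2) n‖) ?_
    filter_upwards [eventually_re_eq_zero_imagAxisAtInfty, eventually_le_abs_add_im e |σ.im|]
      with w hw him
    rw [norm_one, mul_one]
    exact norm_tsum_div_poch_le hu2 (by simpa using hσ) (by simp [hre, hw]) (by simpa using him)
  have htail := hinv2.mul htsum
  simp only [mul_one] at htail
  refine (hshift.add htail).congr' ?_ EventuallyEq.rfl
  filter_upwards [eventually_re_eq_zero_imagAxisAtInfty, eventually_le_abs_add_im e |σ.im|]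
    with w hw him
  rw [tsum_div_poch_eq (summable_div_poch hu hσ (by simp [hre, hw]) him), hu0, mul_inv, add_assoc w]
  ring

lemma hasInvExpansion_F32 {a b c d e : ℂ} (h : 0 < (d + e - a - b - c).re) :
    HasInvExpansion imagAxisAtInfty (fun w ↦ F32 a b c d (w + e) 1) (a * b * c / d) := by
  have hsum : Summable fun n : ℕ ↦ poch a n * poch b n * poch c n / (poch d n * poch 1 n) /
      poch (e.re + I) n := summable_F32_one (by simpa using h)
  have hexp := hasInvExpansion_tsum_div_poch (e := e) (by simp [poch]) (by simp) (by simp) hsum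
  simp only [F32_one]
  simpa [poch] using hexp

/-! ### The function `Φ_ρ` -/

/-- The factor of `PhiC` made of the Gamma quotient and the `₃F₂`, as a function of `s = I * z`. -/
def PhiCAmplitude (k₁ k₂ t : ℝ) (ρ s : ℂ) : ℂ :=
  Complex.Gamma (1 - k₁ + I * t + s) * Complex.Gamma (1 - k₂ + s) /
      (Complex.Gamma (k₁ + s + I * t) * Complex.Gamma (3 / 2 - k₁ + s + I * ρ)) *
    F32 (k₂ - k₁ + 1 / 2 + I * ρ) (3 / 2 - k₁ - k₂ + I * ρ) (1 / 2 - I * t + I * ρ)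
      (1 + 2 * I * ρ) (3 / 2 - k₁ + s + I * ρ) 1

lemma PhiC_eq_mul_amplitude (k₁ k₂ t φ : ℝ) (ρ z : ℂ) :
    PhiC k₁ k₂ t φ ρ z =
      pper k₁ t z * Complex.exp (-2 * φ * z) * PhiCAmplitude k₁ k₂ t ρ (I * z) := by
  rw [PhiC, PhiCAmplitude, mul_comm (pper k₁ t z), ← mul_assoc]

lemma conj_PhiC_conj_eq_mul_amplitude (k₁ k₂ t φ : ℝ) (ρ z : ℂ) :
    conj (PhiC k₁ k₂ t φ ρ (conj z)) = conj (pper k₁ t (conj z)) * Complex.exp (-2 * φ * z) *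
      conj (PhiCAmplitude k₁ k₂ t ρ (conj (-I * z))) := by
  rw [PhiC_eq_mul_amplitude, map_mul, map_mul, ← Complex.exp_conj]
  simp [Complex.conj_ofNat]

lemma hasInvExpansion_PhiCAmplitude (k₁ k₂ t : ℝ) {ρ : ℂ} (hρ : 1 / 2 + I * ρ ≠ 0) {y : ℝ}
    (hy : y < k₁) :
    HasInvExpansion imagAxisAtInfty
      (fun w ↦ PhiCAmplitude k₁ k₂ t ρ (w - y) * w ^ (-(1 / 2 - k₁ - k₂ - I * ρ)))
      ((Aconst k₁ k₂ t ρ + y * Bconst k₁ k₂ ρ) / 2) := by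
  have hΓ₁ := (hasInvExpansion_Gamma_div_Gamma (1 - k₁ + I * t - y) (k₁ - y + I * t)).mono
    imagAxisAtInfty_le_rightHalfPlaneAtInfty
  have hΓ₂ := (hasInvExpansion_Gamma_div_Gamma (1 - k₂ - y) (3 / 2 - k₁ - y + I * ρ)).mono
    imagAxisAtInfty_le_rightHalfPlaneAtInfty
  have hF := hasInvExpansion_F32 (a := k₂ - k₁ + 1 / 2 + I * ρ) (b := 3 / 2 - k₁ - k₂ + I * ρ)
    (c := 1 / 2 - I * t + I * ρ) (d := 1 + 2 * I * ρ) (e := 3 / 2 - k₁ - y + I * ρ) <| by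
      convert sub_pos.2 hy using 1
      trans (k₁ - y + I * t : ℂ).re
      · ring_nf
      · simp
  have hprod := (hΓ₁.mul imagAxisAtInfty_le_cobounded hΓ₂).mul imagAxisAtInfty_le_cobounded hF
  convert hprod.congr' ?_ using 1
  · have hd : 1 + 2 * I * ρ ≠ 0 := fun h ↦ hρ (by linear_combination h / 2)
    rw [Aconst, Bconst]
    field_simp
    ring
  · filter_upwards [imagAxisAtInfty_le_cobounded (Bornology.eventually_ne_cobounded (0 : ℂ))]
      with w hw
    have hpow : w ^ (-(1 / 2 - k₁ - k₂ - I * ρ)) =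
        w ^ (k₁ - y + I * t - (1 - k₁ + I * t - y)) *
          w ^ (3 / 2 - k₁ - y + I * ρ - (1 - k₂ - y)) := by
      rw [← Complex.cpow_add _ _ hw]
      ring_nf
    rw [PhiCAmplitude, hpow, show 1 - k₁ + I * t + (w - y) = w + (1 - k₁ + I * t - y) by ring,
      show 1 - k₂ + (w - y) = w + (1 - k₂ - y) by ring,
      show k₁ + (w - y) + I * t = w + (k₁ - y + I * t) by ring,
      show 3 / 2 - k₁ + (w - y) + I * ρ = w + (3 / 2 - k₁ - y + I * ρ) by ring]
    ring

lemma hasInvExpansion_conj_PhiCAmplitude (k₁ k₂ t : ℝ) {ρ : ℂ} (hρ : 1 / 2 + I * ρ ≠ 0) {y : ℝ}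
    (hy : -y < k₁) :
    HasInvExpansion imagAxisAtInfty
      (fun w ↦ conj (PhiCAmplitude k₁ k₂ t ρ (conj w + y)) *
        w ^ (-(1 / 2 - k₁ - k₂ + I * conj ρ)))
      ((conj (Aconst k₁ k₂ t ρ) - y * conj (Bconst k₁ k₂ ρ)) / 2) := by
  have h := (hasInvExpansion_PhiCAmplitude k₁ k₂ t hρ hy).conj_comp_conj
  convert h.congr' ?_ using 1
  · simp [Complex.conj_ofNat, sub_eq_add_neg]
  · filter_upwards [eventually_re_eq_zero_imagAxisAtInfty] with w hw
    have harg : w.arg ≠ Real.pi := fun h ↦ by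
      have := Complex.arg_eq_pi_iff.1 h
      linarith [this.1]
    rw [map_mul, Complex.conj_cpow _ _ harg, Complex.conj_conj]
    simp [Complex.conj_ofNat, sub_eq_add_neg]

theorem PhiC_asymptotics_general (k₁ k₂ t φ : ℝ) (ρ : ℂ) (hρ : 1 / 2 + I * ρ ≠ 0) (y : ℝ)
    (hy : |y| < k₁) :
    ((fun x : ℝ ↦ PhiC k₁ k₂ t φ ρ (x + I * y) -
        pper k₁ t (x + I * y) * Complex.exp (-2 * φ * (x + I * y)) *
          (I * x) ^ (1 / 2 - k₁ - k₂ - I * ρ) *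
          (1 + (Aconst k₁ k₂ t ρ + y * Bconst k₁ k₂ ρ) / (2 * I * x)))
      =O[cocompact ℝ] fun x : ℝ ↦
        ‖pper k₁ t (x + I * y) * Complex.exp (-2 * φ * (x + I * y)) *
          (I * x) ^ (1 / 2 - k₁ - k₂ - I * ρ)‖ / x ^ 2) ∧
    ((fun x : ℝ ↦ conj (PhiC k₁ k₂ t φ ρ (conj (x + I * y))) -
        conj (pper k₁ t (conj (x + I * y))) * Complex.exp (-2 * φ * (x + I * y)) *
          (-I * x) ^ (1 / 2 - k₁ - k₂ + I * conj ρ) *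
          (1 + (conj (Aconst k₁ k₂ t ρ) - y * conj (Bconst k₁ k₂ ρ)) / (-2 * I * x)))
      =O[cocompact ℝ] fun x : ℝ ↦
        ‖conj (pper k₁ t (conj (x + I * y))) * Complex.exp (-2 * φ * (x + I * y)) *
          (-I * x) ^ (1 / 2 - k₁ - k₂ + I * conj ρ)‖ / x ^ 2) := by
  obtain ⟨hy_neg, hy_pos⟩ := abs_lt.1 hy
  constructor
  · refine ((hasInvExpansion_PhiCAmplitude k₁ k₂ t hρ hy_pos).isBigO_cpow_mul_ofReal Complex.I_re
      Complex.I_ne_zero fun x ↦ pper k₁ t (x + I * y) *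
        Complex.exp (-2 * φ * (x + I * y))).congr_left fun x ↦ ?_
    have harg : I * (x + I * y) = I * x - y := by linear_combination (y : ℂ) * Complex.I_mul_I
    rw [PhiC_eq_mul_amplitude, harg, div_div, mul_assoc 2 I]
  · refine ((hasInvExpansion_conj_PhiCAmplitude k₁ k₂ t hρ (neg_lt.1 hy_neg)
      ).isBigO_cpow_mul_ofReal (u := -I) (by simp) (neg_ne_zero.2 Complex.I_ne_zero) fun x ↦
        conj (pper k₁ t (conj (x + I * y))) *
          Complex.exp (-2 * φ * (x + I * y))).congr_left fun x ↦ ?_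
    have harg : conj (-I * (x + I * y)) = conj (-I * x) + y := by
      rw [show -I * (x + I * y) = -I * x + y by linear_combination -(y : ℂ) * Complex.I_mul_I,
        map_add, Complex.conj_ofReal]
    rw [conj_PhiC_conj_eq_mul_amplitude, harg, div_div, ← mul_assoc, mul_neg, ← neg_mul]

/-- Asymptotic behaviour of `Φ_ρ(x+iy)` and `Φ_ρ*(x+iy)` as `x → ±∞`:
`Φ_ρ(x+iy) = p(x+iy) e^{−2φ(x+iy)} (ix)^{1/2−k₁−k₂−iρ}(1 + (A(ρ)+yB(ρ))/(2ix) + O(1/x²))` and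
`Φ_ρ*(x+iy) = p*(x+iy) e^{−2φ(x+iy)} (−ix)^{1/2−k₁−k₂+i conj ρ}(1 + (conj A(ρ) − y conj B(ρ))/(−2ix) + O(1/x²))`. -/
theorem PhiC_asymptotics (k₁ k₂ : ℝ) (hk₁ : 1 < k₁) (hk₂ : 0 < k₂) (t : ℝ)
    (φ : ℝ) (hφ₀ : 0 < φ) (hφπ : φ < Real.pi) (ρ : ℂ) (hρ : 1/2 + I * ρ ≠ 0)
    (y : ℝ) (hy : -1 ≤ y) (hy' : y ≤ 1) :
    ((fun x : ℝ => PhiC k₁ k₂ t φ ρ ((x : ℂ) + I * y) -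
        pper k₁ t ((x : ℂ) + I * y) * Complex.exp (-2 * (φ : ℂ) * ((x : ℂ) + I * y)) *
          (I * (x : ℂ)) ^ (1/2 - (k₁ : ℂ) - k₂ - I * ρ) *
          (1 + (Aconst k₁ k₂ t ρ + (y : ℂ) * Bconst k₁ k₂ ρ) / (2 * I * x)))
      =O[atTop] fun x : ℝ =>
        ‖pper k₁ t ((x : ℂ) + I * y) * Complex.exp (-2 * (φ : ℂ) * ((x : ℂ) + I * y)) *
          (I * (x : ℂ)) ^ (1/2 - (k₁ : ℂ) - k₂ - I * ρ)‖ / x ^ 2) ∧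
    ((fun x : ℝ => PhiC k₁ k₂ t φ ρ ((x : ℂ) + I * y) -
        pper k₁ t ((x : ℂ) + I * y) * Complex.exp (-2 * (φ : ℂ) * ((x : ℂ) + I * y)) *
          (I * (x : ℂ)) ^ (1/2 - (k₁ : ℂ) - k₂ - I * ρ) *
          (1 + (Aconst k₁ k₂ t ρ + (y : ℂ) * Bconst k₁ k₂ ρ) / (2 * I * x)))
      =O[atBot] fun x : ℝ =>
        ‖pper k₁ t ((x : ℂ) + I * y) * Complex.exp (-2 * (φ : ℂ) * ((x : ℂ) + I * y)) *
          (I * (x : ℂ)) ^ (1/2 - (k₁ : ℂ) - k₂ - I * ρ)‖ / x ^ 2) ∧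
    ((fun x : ℝ => conj (PhiC k₁ k₂ t φ ρ (conj ((x : ℂ) + I * y))) -
        conj (pper k₁ t (conj ((x : ℂ) + I * y))) *
          Complex.exp (-2 * (φ : ℂ) * ((x : ℂ) + I * y)) *
          (-I * (x : ℂ)) ^ (1/2 - (k₁ : ℂ) - k₂ + I * conj ρ) *
          (1 + (conj (Aconst k₁ k₂ t ρ) - (y : ℂ) * conj (Bconst k₁ k₂ ρ)) / (-2 * I * x)))
      =O[atTop] fun x : ℝ =>
        ‖conj (pper k₁ t (conj ((x : ℂ) + I * y))) *
          Complex.exp (-2 * (φ : ℂ) * ((x : ℂ) + I * y)) *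
          (-I * (x : ℂ)) ^ (1/2 - (k₁ : ℂ) - k₂ + I * conj ρ)‖ / x ^ 2) ∧
    ((fun x : ℝ => conj (PhiC k₁ k₂ t φ ρ (conj ((x : ℂ) + I * y))) -
        conj (pper k₁ t (conj ((x : ℂ) + I * y))) *
          Complex.exp (-2 * (φ : ℂ) * ((x : ℂ) + I * y)) *
          (-I * (x : ℂ)) ^ (1/2 - (k₁ : ℂ) - k₂ + I * conj ρ) *
          (1 + (conj (Aconst k₁ k₂ t ρ) - (y : ℂ) * conj (Bconst k₁ k₂ ρ)) / (-2 * I * x)))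
      =O[atBot] fun x : ℝ =>
        ‖conj (pper k₁ t (conj ((x : ℂ) + I * y))) *
          Complex.exp (-2 * (φ : ℂ) * ((x : ℂ) + I * y)) *
          (-I * (x : ℂ)) ^ (1/2 - (k₁ : ℂ) - k₂ + I * conj ρ)‖ / x ^ 2) := by
  have hy_abs : |y| < k₁ := (abs_le.2 ⟨hy, hy'⟩).trans_lt hk₁
  obtain ⟨hPhi, hPhi_star⟩ := PhiC_asymptotics_general k₁ k₂ t φ ρ hρ y hy_abs
  rw [cocompact_eq_atBot_atTop, isBigO_sup] at hPhi hPhi_star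
  exact ⟨hPhi.2, hPhi.1, hPhi_star.2, hPhi_star.1⟩
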